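/- Let W be the Wiener measure on Ω and let (ε_n)_{n≥1} be a positive sequence decreasing to 0 such that log ε_n ∼ log ε_{n+1} as n → ∞. Then for every ω̄ ∈ Ω: underline-ord_loc W(ω̄) ≥ liminf_{n→∞} log(−log W(C_n(ω̄,ε_n)))/(−log ε_n) and overline-ord_loc W(ω̄) ≥ limsup_{n→∞} log(−log W(C_n(ω̄,ε_n)))/(−log ε_n). -/

import Mathlib

open scoped ENNReal NNReal Topology
open Filter MeasureTheory Metric Set

noncomputable section

namespace Multifractal


/-- The `δ`-level Hausdorff pre-measure `H^h_δ` associated to a gauge `h`. -/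
def hMeasAux {X : Type*} [MetricSpace X] (h : ℝ → ℝ) (δ : ℝ≥0∞) (E : Set X) : ℝ≥0∞ :=
  ⨅ (c : ℕ → X) (r : ℕ → ℝ) (_ : ∀ n, 0 < r n ∧ ENNReal.ofReal (r n) ≤ δ)
    (_ : E ⊆ ⋃ n, Metric.ball (c n) (r n)), ∑' n, ENNReal.ofReal (h (r n))

/-- The `h`-Hausdorff measure. -/
def hMeas {X : Type*} [MetricSpace X] (h : ℝ → ℝ) (E : Set X) : ℝ≥0∞ :=
  ⨆ (δ : ℝ≥0∞) (_ : 0 < δ), hMeasAux h δ E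

/-- `Ω`: continuous paths on `[0,1]` vanishing at `0`, with the uniform metric. -/
abbrev PathSpace : Type := {f : C(unitInterval, ℝ) // f 0 = 0}

instance : MeasurableSpace PathSpace := borel PathSpace
instance : BorelSpace PathSpace := ⟨rfl⟩

/-- `μ` is a centered Gaussian process measure on path space with covariance `K`:
a probability measure under which every finite linear combination of coordinates
is a centered real Gaussian with the variance given by `K`. -/
def IsGaussianProcess (μ : Measure PathSpace) (K : unitInterval → unitInterval → ℝ) : Prop :=
  IsProbabilityMeasure μ ∧
  ∀ (n : ℕ) (t : Fin n → unitInterval) (c : Fin n → ℝ),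
    Measure.map (fun ω : PathSpace => ∑ i, c i * ω.1 (t i)) μ =
      ProbabilityTheory.gaussianReal 0
        (Real.toNNReal (∑ i, ∑ j, c i * c j * K (t i) (t j)))

/-- `W` is the Wiener measure: the coordinate process is centered Gaussian with
covariance `min s t`. -/
def IsWienerMeasure (W : Measure PathSpace) : Prop :=
  IsGaussianProcess W (fun s t => min (s : ℝ) (t : ℝ))

/-- `μ` is the law of fractional Brownian motion with Hurst parameter `H`. -/
def IsFBM (H : ℝ) (μ : Measure PathSpace) : Prop :=
  IsGaussianProcess μ (fun s t =>
    ((s : ℝ) ^ (2*H) + (t : ℝ) ^ (2*H) - |(t : ℝ) - (s : ℝ)| ^ (2*H)) / 2)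

/-- Clamping of a real number into the unit interval. -/
def clampI (t : ℝ) : unitInterval :=
  ⟨min (max t 0) 1, Set.mem_Icc.mpr ⟨le_min (le_max_right _ _) zero_le_one, min_le_right _ _⟩⟩

/-- The grid point `j/n` of the unit interval. -/
def gridPt (n j : ℕ) : unitInterval := clampI ((j : ℝ) / n)

/-- The discrete quadratic variation `Q_n(ω)`. -/
def Qvar (ω : PathSpace) (n : ℕ) : ℝ :=
  Real.sqrt ((1 / (n : ℝ)) *
    ∑ i ∈ Finset.range n, (ω.1 (gridPt n (i+1)) - ω.1 (gridPt n i)) ^ 2)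

/-- Lower Orey exponent `q^-(ω)`. -/
def oreyLower (ω : PathSpace) : EReal :=
  liminf (fun n : ℕ => ((-Real.log (Qvar ω n) / Real.log n : ℝ) : EReal)) atTop

/-- Upper Orey exponent `q^+(ω)`. -/
def oreyUpper (ω : PathSpace) : EReal :=
  limsup (fun n : ℕ => ((-Real.log (Qvar ω n) / Real.log n : ℝ) : EReal)) atTop

/-- The set `C_a` of `a`-Hölder paths. -/
def holderSet (a : ℝ) : Set PathSpace :=
  {ω | ∃ C : ℝ, ∀ x y : unitInterval, |ω.1 x - ω.1 y| ≤ C * |(x : ℝ) - (y : ℝ)| ^ a}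

/-- The set `C_a^- = ⋂_{0<b<a} C_b` of nearly `a`-Hölder paths. -/
def holderMinus (a : ℝ) : Set PathSpace := ⋂ b ∈ Set.Ioo (0:ℝ) a, holderSet b

/-- The set `C_q^crit` of critical `q`-Hölder paths: nearly `q`-Hölder paths whose
Orey exponent exists and equals `q`. -/
def holderCrit (q : ℝ) : Set PathSpace :=
  {ω | ω ∈ holderMinus q ∧ oreyLower ω = (q : EReal) ∧ oreyUpper ω = (q : EReal)}

/-- The set `Ω^crit` of critical Hölder paths. -/
def pathCrit : Set PathSpace := ⋃ q ∈ Set.Ioo (0:ℝ) 1, holderCrit q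

/-- The lower local order of a measure `μ` on path space at `ω`. -/
def lowerLocOrd (μ : Measure PathSpace) (ω : PathSpace) : EReal :=
  liminf (fun ε : ℝ =>
    ((Real.log (-Real.log ((μ (Metric.ball ω ε)).toReal)) / (-Real.log ε) : ℝ) : EReal))
    (𝓝[>] (0:ℝ))

/-- The upper local order of a measure `μ` on path space at `ω`. -/
def upperLocOrd (μ : Measure PathSpace) (ω : PathSpace) : EReal :=
  limsup (fun ε : ℝ =>
    ((Real.log (-Real.log ((μ (Metric.ball ω ε)).toReal)) / (-Real.log ε) : ℝ) : EReal))
    (𝓝[>] (0:ℝ))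

/-- The Hausdorff order of a set of paths: `sup {α > 0 : H^{h_α}(A) = ∞}` where
`h_α(ε) = exp(-ε^{-α})`. -/
def ordH (A : Set PathSpace) : ℝ≥0∞ :=
  ⨆ (α : ℝ) (_ : 0 < α ∧ hMeas (fun ε : ℝ => Real.exp (-(ε ^ (-α)))) A = ∞),
    ENNReal.ofReal α

/-- The level set `E(ξ)` of paths at which the local order of `μ` exists and
equals `ξ`. -/
def levelOrd (μ : Measure PathSpace) (ξ : ℝ) : Set PathSpace :=
  {ω | lowerLocOrd μ ω = (ξ : EReal) ∧ upperLocOrd μ ω = (ξ : EReal)}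

/-- The cylinder `C_n(ω̄, ε)` around `ω̄` of depth `n` and radius `ε`. -/
def cylinder (ωb : PathSpace) (n : ℕ) (ε : ℝ) : Set PathSpace :=
  {ω | ∀ j ∈ Finset.Icc 1 n, |ω.1 (gridPt n j) - ωb.1 (gridPt n j)| ≤ ε}

/-- The affine interpolation `L̄_j` of `ω̄` on `[(j-1)/n, j/n]`, evaluated at `t`. -/
def affInterp (ωb : PathSpace) (n j : ℕ) (t : ℝ) : ℝ :=
  ωb.1 (gridPt n (j-1)) +
    (t - ((j-1 : ℕ) : ℝ) / n) * n * (ωb.1 (gridPt n j) - ωb.1 (gridPt n (j-1)))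

/-- The maximal deviation `Δ_n(ω̄)` of `ω̄` from its chords on the `1/n`-grid. -/
def chordDev (ωb : PathSpace) (n : ℕ) : ℝ :=
  sSup {d : ℝ | ∃ j ∈ Finset.Icc 1 n, ∃ t ∈ Set.Icc (((j-1 : ℕ) : ℝ) / n) ((j : ℝ) / n),
    d = |ωb.1 (clampI t) - affInterp ωb n j t|}


section WienerSupport

open ProbabilityTheory

@[fun_prop]
lemma measurable_eval (t : unitInterval) : Measurable (fun ω : PathSpace => ω.1 t) :=
  Continuous.measurable (by fun_prop)

lemma IsGaussianProcess.isGaussianProcess_eval {μ : Measure PathSpace}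
    {K : unitInterval → unitInterval → ℝ} (hμ : IsGaussianProcess μ K) :
    ProbabilityTheory.IsGaussianProcess (fun (t : unitInterval) (ω : PathSpace) => ω.1 t) μ where
  hasGaussianLaw I := by
    refine ⟨isGaussian_of_map_eq_gaussianReal fun L => ?_⟩
    classical
    rw [Measure.map_map (by fun_prop) (by fun_prop)]
    let e := I.equivFin.symm
    refine ⟨0, _, Eq.trans ?_ (hμ.2 _ (fun i => (e i : unitInterval))
      (fun i => L (Pi.single (e i) 1)))⟩
    congr 1
    ext ω
    rw [Equiv.sum_comp e (fun i => L (Pi.single i 1) * ω.1 i), Function.comp_apply,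
      ← L.sum_comp_single]
    refine Finset.sum_congr rfl fun i _ => ?_
    have : (Pi.single i (I.restrict (fun t => ω.1 t) i) : I → ℝ)
        = ω.1 i • (Pi.single i (1 : ℝ) : I → ℝ) := by
      ext j; by_cases h : j = i
      · subst h; simp
      · simp [h]
    rw [ContinuousLinearMap.comp_apply, ContinuousLinearMap.single_apply, this, map_smul,
      smul_eq_mul, mul_comm]

variable {W : Measure PathSpace}

lemma IsWienerMeasure.memLp_eval (hW : IsWienerMeasure W) (t : unitInterval) :
    MemLp (fun ω : PathSpace => ω.1 t) 2 W :=
  (hW.isGaussianProcess_eval.hasGaussianLaw_eval t).memLp_two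

lemma IsWienerMeasure.map_eval (hW : IsWienerMeasure W) (t : unitInterval) :
    W.map (fun ω : PathSpace => ω.1 t) = gaussianReal 0 (Real.toNNReal t) := by
  simpa using hW.2 1 (fun _ => t) (fun _ => 1)

lemma IsWienerMeasure.map_sub (hW : IsWienerMeasure W) {s t : unitInterval} (hst : s ≤ t) :
    W.map (fun ω : PathSpace => ω.1 t - ω.1 s) = gaussianReal 0 (Real.toNNReal (t - s)) := by
  have h := hW.2 2 ![t, s] ![1, -1]
  have hst' : (s : ℝ) ≤ t := hst
  simp only [Fin.sum_univ_two, Matrix.cons_val_zero, Matrix.cons_val_one, min_self,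
    min_eq_left hst', min_eq_right hst'] at h
  convert h using 2
  · ext ω; ring
  · congr 1; ring

lemma IsWienerMeasure.variance_eval (hW : IsWienerMeasure W) (t : unitInterval) :
    Var[fun ω : PathSpace => ω.1 t; W] = t := by
  have h := variance_id_gaussianReal (μ := 0) (v := Real.toNNReal t)
  rw [← hW.map_eval t, variance_map (by fun_prop) (by fun_prop)] at h
  simpa [Function.comp_def, t.2.1] using h

lemma IsWienerMeasure.variance_sub (hW : IsWienerMeasure W) {s t : unitInterval} (hst : s ≤ t) :
    Var[fun ω : PathSpace => ω.1 t - ω.1 s; W] = t - s := by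
  have h := variance_id_gaussianReal (μ := 0) (v := Real.toNNReal (t - s))
  rw [← hW.map_sub hst, variance_map (by fun_prop) (by fun_prop)] at h
  have hst' : (s : ℝ) ≤ t := hst
  simpa [Function.comp_def, hst'] using h

lemma IsWienerMeasure.covariance_eval (hW : IsWienerMeasure W) (s t : unitInterval) :
    cov[fun ω : PathSpace => ω.1 s, fun ω : PathSpace => ω.1 t; W] = min (s : ℝ) t := by
  have := hW.1
  wlog hst : s ≤ t generalizing s t
  · rw [covariance_comm, this t s (le_of_not_ge hst), min_comm]
  have hst' : (s : ℝ) ≤ t := hst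
  have h := hW.variance_sub hst
  rw [variance_fun_sub (hW.memLp_eval t) (hW.memLp_eval s), hW.variance_eval,
    hW.variance_eval, covariance_comm] at h
  rw [min_eq_left hst']
  linarith

lemma coe_gridPt {n j : ℕ} (hj : j ≤ n) : (gridPt n j : ℝ) = j / n := by
  have h : (j : ℝ) / n ≤ 1 := div_le_one_of_le₀ (by exact_mod_cast hj) (by positivity)
  change min (max ((j : ℝ) / n) 0) 1 = j / n
  rw [max_eq_left (by positivity), min_eq_left h]

lemma gridPt_zero (n : ℕ) : gridPt n 0 = 0 :=
  Subtype.ext (by simpa using coe_gridPt (Nat.zero_le n))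

lemma gridPt_self {n : ℕ} (hn : 0 < n) : gridPt n n = 1 := by
  refine Subtype.ext ?_
  rw [coe_gridPt le_rfl, div_self (by positivity)]; rfl

/-- The increment of a path over the `j`-th cell of the `1/n`-grid. -/
def gridIncr (n j : ℕ) (ω : PathSpace) : ℝ := ω.1 (gridPt n (j + 1)) - ω.1 (gridPt n j)

/-- The fraction of the `j`-th cell of the `1/n`-grid lying below `t`. -/
def cellWeight (n j : ℕ) (t : unitInterval) : ℝ :=
  n * (min (t : ℝ) (gridPt n (j + 1)) - min (t : ℝ) (gridPt n j))

/-- The deviation of a path from its piecewise affine interpolation on the `1/n`-grid. -/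
def interpDev (n : ℕ) (t : unitInterval) (ω : PathSpace) : ℝ :=
  ω.1 t - ∑ j : Fin n, cellWeight n j t * gridIncr n j ω

@[fun_prop]
lemma measurable_gridIncr (n j : ℕ) : Measurable (gridIncr n j) := by
  unfold gridIncr; fun_prop

@[fun_prop]
lemma measurable_interpDev (n : ℕ) (t : unitInterval) : Measurable (interpDev n t) := by
  unfold interpDev; fun_prop

lemma gridPt_le_succ {n j : ℕ} (hj : j < n) : gridPt n j ≤ gridPt n (j + 1) := by
  refine Subtype.coe_le_coe.1 ?_
  rw [coe_gridPt hj.le, coe_gridPt hj]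
  gcongr; simp

lemma coe_gridPt_succ_sub {n j : ℕ} (hj : j < n) :
    (gridPt n (j + 1) : ℝ) - gridPt n j = 1 / n := by
  rw [coe_gridPt hj.le, coe_gridPt hj]; push_cast; ring

lemma cellWeight_eq_one {n j : ℕ} (hj : j < n) {t : unitInterval} (ht : gridPt n (j + 1) ≤ t) :
    cellWeight n j t = 1 := by
  have h1 : (gridPt n (j + 1) : ℝ) ≤ t := ht
  have h2 : (gridPt n j : ℝ) ≤ t := (gridPt_le_succ hj).trans ht
  have hn : (n : ℝ) ≠ 0 := by
    have : 0 < n := by omega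
    positivity
  rw [cellWeight, min_eq_right h1, min_eq_right h2, coe_gridPt_succ_sub hj]
  field_simp

lemma cellWeight_eq_zero {n j : ℕ} (hj : j < n) {t : unitInterval} (ht : t ≤ gridPt n j) :
    cellWeight n j t = 0 := by
  have h1 : (t : ℝ) ≤ gridPt n j := ht
  have h2 : (t : ℝ) ≤ gridPt n (j + 1) := ht.trans (gridPt_le_succ hj)
  rw [cellWeight, min_eq_left h1, min_eq_left h2]; ring

lemma cellWeight_mem_Icc {n j : ℕ} (hj : j < n) (t : unitInterval) :
    cellWeight n j t ∈ Icc (0 : ℝ) 1 := by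
  rcases le_total t (gridPt n j) with h | h
  · simp [cellWeight_eq_zero hj h]
  rcases le_total (gridPt n (j + 1)) t with h' | h'
  · simp [cellWeight_eq_one hj h']
  have h1 : (gridPt n j : ℝ) ≤ t := h
  have h2 : (t : ℝ) ≤ gridPt n (j + 1) := h'
  have h3 := coe_gridPt_succ_sub hj
  have hn : (0 : ℝ) < n := by
    have : 0 < n := by omega
    positivity
  rw [cellWeight, min_eq_left h2, min_eq_right h1]
  refine ⟨mul_nonneg hn.le (by linarith), ?_⟩
  calc (n : ℝ) * (t - gridPt n j) ≤ n * (1 / n) := by gcongr; linarith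
    _ = 1 := by field_simp

lemma IsWienerMeasure.memLp_gridIncr (hW : IsWienerMeasure W) (n j : ℕ) :
    MemLp (gridIncr n j) 2 W :=
  (hW.memLp_eval _).sub (hW.memLp_eval _)

lemma IsWienerMeasure.covariance_gridIncr_eval (hW : IsWienerMeasure W) {n j : ℕ} (hj : j < n)
    (t : unitInterval) :
    cov[gridIncr n j, fun ω : PathSpace => ω.1 t; W] = cellWeight n j t / n := by
  have := hW.1
  have hn : (n : ℝ) ≠ 0 := by
    have : 0 < n := by omega
    positivity
  unfold gridIncr
  rw [covariance_fun_sub_left (hW.memLp_eval _) (hW.memLp_eval _) (hW.memLp_eval _),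
    hW.covariance_eval, hW.covariance_eval, cellWeight, min_comm, min_comm (gridPt n j : ℝ)]
  field_simp

lemma IsWienerMeasure.covariance_gridIncr (hW : IsWienerMeasure W) {n i j : ℕ} (hi : i < n)
    (hj : j < n) : cov[gridIncr n i, gridIncr n j; W] = if i = j then 1 / (n : ℝ) else 0 := by
  have := hW.1
  wlog hij : i ≤ j generalizing i j
  · rw [covariance_comm, this hj hi (by omega)]
    simp only [eq_comm]
  have h : cov[gridIncr n i, gridIncr n j; W]
      = cellWeight n i (gridPt n (j + 1)) / n - cellWeight n i (gridPt n j) / n := by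
    rw [← hW.covariance_gridIncr_eval hi, ← hW.covariance_gridIncr_eval hi]
    exact covariance_fun_sub_right (hW.memLp_gridIncr n i) (hW.memLp_eval _) (hW.memLp_eval _)
  rw [h]
  have hle {a b : ℕ} (hab : a ≤ b) (hb : b ≤ n) : gridPt n a ≤ gridPt n b := by
    refine Subtype.coe_le_coe.1 ?_
    rw [coe_gridPt (hab.trans hb), coe_gridPt hb]
    gcongr
  rw [cellWeight_eq_one hi (hle (by omega) hj)]
  split_ifs with heq
  · subst heq; simp [cellWeight_eq_zero hi le_rfl]
  · rw [cellWeight_eq_one hi (hle (by omega) hj.le)]; simp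

lemma IsWienerMeasure.covariance_gridIncr_interpDev (hW : IsWienerMeasure W) {n : ℕ} (j : Fin n)
    (t : unitInterval) : cov[gridIncr n j, interpDev n t; W] = 0 := by
  have := hW.1
  have hmem (i : Fin n) : MemLp (fun ω => cellWeight n i t * gridIncr n i ω) 2 W :=
    (hW.memLp_gridIncr n i).const_mul _
  unfold interpDev
  rw [covariance_fun_sub_right (hW.memLp_gridIncr n j) (hW.memLp_eval t)
    (memLp_finsetSum _ fun i _ => hmem i), hW.covariance_gridIncr_eval j.2,
    covariance_fun_sum_right hmem (hW.memLp_gridIncr n j)]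
  simp_rw [covariance_const_mul_right, hW.covariance_gridIncr j.2 (Fin.is_lt _), Fin.val_inj]
  simp [div_eq_mul_inv]

lemma IsWienerMeasure.isGaussianProcess_gridIncr_interpDev (hW : IsWienerMeasure W) (n : ℕ)
    {T : Type*} (q : T → unitInterval) :
    ProbabilityTheory.IsGaussianProcess
      (Sum.elim (fun j : Fin n => gridIncr n j) (fun k : T => interpDev n (q k))) W := by
  classical
  refine hW.isGaussianProcess_eval.of_isGaussianProcess ?_
  let I (t : unitInterval) : Finset unitInterval :=
    insert t (Finset.univ.image (fun j : Fin (n + 1) => gridPt n j))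
  have hI (t : unitInterval) {j : ℕ} (hj : j < n + 1) : gridPt n j ∈ I t :=
    Finset.mem_insert_of_mem (Finset.mem_image.2 ⟨⟨j, hj⟩, Finset.mem_univ _, rfl⟩)
  let D (t : unitInterval) (j : Fin n) : (I t → ℝ) →L[ℝ] ℝ :=
    ContinuousLinearMap.proj (R := ℝ) (φ := fun _ => ℝ) (⟨_, hI t (Nat.succ_lt_succ j.2)⟩ : I t) -
      ContinuousLinearMap.proj (R := ℝ) (φ := fun _ => ℝ)
        (⟨_, hI t (j.2.trans n.lt_succ_self)⟩ : I t)
  rintro (j | k)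
  · exact ⟨I 0, D 0 j, fun ω => by simp [D, gridIncr]⟩
  · refine ⟨I (q k), ContinuousLinearMap.proj (R := ℝ) (φ := fun _ => ℝ)
      (⟨q k, Finset.mem_insert_self _ _⟩ : I (q k)) -
      ∑ j : Fin n, cellWeight n j (q k) • D (q k) j, fun ω => ?_⟩
    simp [D, gridIncr, interpDev]

lemma IsWienerMeasure.iIndepFun_gridIncr (hW : IsWienerMeasure W) (n : ℕ) :
    iIndepFun (fun j : Fin n => gridIncr n j) W := by
  have hG := (hW.isGaussianProcess_gridIncr_interpDev n (id : unitInterval → _)).comp_right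
    (Sum.inl : Fin n → _)
  have hL : HasGaussianLaw (fun ω (j : Fin n) => gridIncr n j ω) W :=
    (hG.hasGaussianLaw Finset.univ).map
      (ContinuousLinearMap.pi fun j : Fin n =>
        ContinuousLinearMap.proj (R := ℝ) (φ := fun _ => ℝ)
          (⟨j, Finset.mem_univ j⟩ : (Finset.univ : Finset (Fin n))))
  refine hL.iIndepFun_of_covariance_eq_zero fun i j hij => ?_
  rw [hW.covariance_gridIncr i.2 j.2, if_neg (by simpa [Fin.val_inj] using hij)]

lemma IsWienerMeasure.indepFun_gridIncr_interpDev (hW : IsWienerMeasure W) (n : ℕ)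
    {T : Type*} (q : T → unitInterval) :
    IndepFun (fun ω (j : Fin n) => gridIncr n j ω) (fun ω k => interpDev n (q k) ω) W :=
  (hW.isGaussianProcess_gridIncr_interpDev n q).indepFun_of_covariance_eq_zero
    (fun _ => by fun_prop) (fun _ => by fun_prop)
    fun j k => hW.covariance_gridIncr_interpDev j (q k)

lemma IsWienerMeasure.measure_gridIncr_pos (hW : IsWienerMeasure W) {n : ℕ} (x : ℕ → ℝ) {δ : ℝ}
    (hδ : 0 < δ) : 0 < W {ω | ∀ j : Fin n, gridIncr n j ω ∈ ball (x j) δ} := by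
  have h := (hW.iIndepFun_gridIncr n).measure_inter_preimage_eq_mul Finset.univ
    (sets := fun j => ball (x j) δ) fun _ _ => measurableSet_ball
  have hset : {ω | ∀ j : Fin n, gridIncr n j ω ∈ ball (x j) δ}
      = ⋂ j ∈ (Finset.univ : Finset (Fin n)), gridIncr n j ⁻¹' ball (x j) δ := by
    ext; simp
  rw [hset, h, pos_iff_ne_zero, Finset.prod_ne_zero_iff]
  intro j _ h0
  rw [← Measure.map_apply (by fun_prop) measurableSet_ball] at h0
  have hn : 0 < n := j.pos
  have hv : Real.toNNReal ((gridPt n (j + 1) : ℝ) - gridPt n j) ≠ 0 := by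
    rw [coe_gridPt_succ_sub j.2]
    exact (Real.toNNReal_pos.2 (by positivity)).ne'
  have hmap : W.map (gridIncr n j) = _ := hW.map_sub (gridPt_le_succ j.2)
  rw [hmap] at h0
  exact (measure_ball_pos volume (x j) hδ).ne' (gaussianReal_absolutelyContinuous' 0 hv h0)

lemma interpDev_eq_sum {n : ℕ} (hn : 0 < n) (t : unitInterval) (ω : PathSpace) :
    interpDev n t ω = ∑ j ∈ Finset.range n, (ω.1 (min t (gridPt n (j + 1))) -
      ω.1 (min t (gridPt n j)) - cellWeight n j t * gridIncr n j ω) := by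
  rw [Finset.sum_sub_distrib, Finset.sum_range_sub (fun j => ω.1 (min t (gridPt n j))),
    gridPt_self hn, gridPt_zero, min_eq_left unitInterval.le_one', min_eq_right unitInterval.nonneg',
    ω.2, sub_zero, interpDev, Fin.sum_univ_eq_sum_range (fun j => cellWeight n j t * gridIncr n j ω)]

lemma abs_interpDev_le {n : ℕ} (hn : 0 < n) {η : ℝ} (hη : 0 ≤ η) (ω : PathSpace)
    (h : ∀ s t : unitInterval, dist s t ≤ 1 / n → |ω.1 s - ω.1 t| ≤ η) (t : unitInterval) :
    |interpDev n t ω| ≤ 2 * η := by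
  have hn' : (0 : ℝ) < n := by positivity
  rw [interpDev_eq_sum hn]
  set f : ℕ → ℝ := fun j => ω.1 (min t (gridPt n (j + 1))) -
    ω.1 (min t (gridPt n j)) - cellWeight n j t * gridIncr n j ω with hf
  change |∑ j ∈ Finset.range n, f j| ≤ _
  set k := ⌊(n : ℝ) * t⌋₊ with hk
  have hnt : 0 ≤ (n : ℝ) * t := mul_nonneg hn'.le t.2.1
  have hne (j : ℕ) (hj : j < n) (hjk : j ≠ k) : f j = 0 := by
    rcases lt_or_gt_of_ne hjk with hlt | hlt
    · have h1 : gridPt n (j + 1) ≤ t := by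
        refine Subtype.coe_le_coe.1 ?_
        rw [coe_gridPt hj, div_le_iff₀ hn', mul_comm]
        exact (Nat.le_floor_iff hnt).1 hlt
      simp [hf, cellWeight_eq_one hj h1, min_eq_right h1,
        min_eq_right ((gridPt_le_succ hj).trans h1), gridIncr]
    · have h1 : t ≤ gridPt n j := by
        refine Subtype.coe_le_coe.1 ?_
        rw [coe_gridPt hj.le, le_div_iff₀ hn', mul_comm]
        exact ((Nat.floor_lt hnt).1 hlt).le
      simp [hf, cellWeight_eq_zero hj h1, min_eq_left h1,
        min_eq_left (h1.trans (gridPt_le_succ hj))]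
  have hbound (j : ℕ) (hj : j < n) : |f j| ≤ 2 * η := by
    have hdist : dist (gridPt n (j + 1)) (gridPt n j) ≤ 1 / n := by
      rw [Subtype.dist_eq, Real.dist_eq, coe_gridPt_succ_sub hj, abs_of_nonneg (by positivity)]
    have h1 : |ω.1 (min t (gridPt n (j + 1))) - ω.1 (min t (gridPt n j))| ≤ η := by
      refine h _ _ (le_trans ?_ hdist)
      have := abs_min_sub_min_le_max (t : ℝ) (gridPt n (j + 1)) t (gridPt n j)
      simpa [Subtype.dist_eq, Real.dist_eq] using this
    have h2 : |cellWeight n j t * gridIncr n j ω| ≤ η := by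
      have hw := cellWeight_mem_Icc hj t
      rw [abs_mul, abs_of_nonneg hw.1]
      calc cellWeight n j t * |gridIncr n j ω| ≤ 1 * |gridIncr n j ω| := by
            gcongr
            exact hw.2
        _ ≤ η := by rw [one_mul]; exact h _ _ hdist
    calc |f j| ≤ _ := abs_sub _ _
      _ ≤ 2 * η := by linarith
  by_cases hkn : k ∈ Finset.range n
  · rw [Finset.sum_eq_single_of_mem k hkn fun j hj hjk => hne j (Finset.mem_range.1 hj) hjk]
    exact hbound k (Finset.mem_range.1 hkn)
  · rw [Finset.sum_eq_zero fun j hj =>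
      hne j (Finset.mem_range.1 hj) (fun h => hkn (h ▸ hj)), abs_zero]
    positivity

lemma eventually_abs_interpDev_le (ω : PathSpace) {η : ℝ} (hη : 0 < η) :
    ∀ᶠ n : ℕ in atTop, ∀ t, |interpDev n t ω| ≤ η := by
  have huc := CompactSpace.uniformContinuous_of_continuous ω.1.continuous
  obtain ⟨δ, hδ, h⟩ := Metric.uniformContinuous_iff.1 huc (η / 2) (by positivity)
  filter_upwards [tendsto_one_div_atTop_nhds_zero_nat.eventually (gt_mem_nhds hδ),
    eventually_gt_atTop 0] with n hn hpos t
  have := abs_interpDev_le hpos (η := η / 2) (by positivity) ω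
    (fun s t hst => (h (hst.trans_lt hn)).le) t
  linarith

/-- The Wiener measure has full support. -/
lemma IsWienerMeasure.measure_ball_pos (hW : IsWienerMeasure W) (ωb : PathSpace) {r : ℝ}
    (hr : 0 < r) : 0 < W (ball ωb r) := by
  have := hW.1
  let q : ℕ → unitInterval := TopologicalSpace.denseSeq unitInterval
  have hq : DenseRange q := TopologicalSpace.denseRange_denseSeq _
  let S : Set (ℕ → ℝ) := {x | ∀ k, |x k| ≤ r / 4}
  have hS : MeasurableSet S := by
    have : S = ⋂ k, (fun x : ℕ → ℝ => |x k|) ⁻¹' Iic (r / 4) := by ext; simp [S]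
    rw [this]
    exact MeasurableSet.iInter fun k => measurableSet_Iic.preimage (by fun_prop)
  obtain ⟨N, hN⟩ := eventually_atTop.1
    ((eventually_abs_interpDev_le ωb (η := r / 4) (by positivity)).and (eventually_gt_atTop 0))
  obtain ⟨n, hnN, hn⟩ : ∃ n ≥ N, W ((fun ω k => interpDev n (q k) ω) ⁻¹' S) ≠ 0 := by
    by_contra! hcon
    have hnull : W (⋃ n : {n // n ≥ N}, (fun ω k => interpDev n (q k) ω) ⁻¹' S) = 0 :=
      measure_iUnion_null fun n => hcon n n.2
    have huniv : (⋃ n : {n // n ≥ N}, (fun ω k => interpDev n (q k) ω) ⁻¹' S) = univ := by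
      refine eq_univ_of_forall fun ω => ?_
      obtain ⟨n, h1, h2⟩ := ((eventually_abs_interpDev_le ω (η := r / 4) (by positivity)).and
        (eventually_ge_atTop N)).exists
      exact mem_iUnion.2 ⟨⟨n, h2⟩, fun k => h1 _⟩
    rw [huniv, measure_univ] at hnull
    exact one_ne_zero hnull
  obtain ⟨hdev, hn0⟩ := hN n hnN
  have hn' : (0 : ℝ) < n := by positivity
  let A : Set (Fin n → ℝ) := {x | ∀ j : Fin n, x j ∈ ball (gridIncr n j ωb) (r / (4 * n))}
  have hA : MeasurableSet A := by
    have : A = ⋂ j : Fin n, (fun x : Fin n → ℝ => x j) ⁻¹' ball (gridIncr n j ωb) (r / (4 * n)) := by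
      ext; simp [A]
    rw [this]
    exact MeasurableSet.iInter fun k => measurableSet_ball.preimage (by fun_prop)
  have hApos := hW.measure_gridIncr_pos (n := n) (fun j => gridIncr n j ωb)
    (δ := r / (4 * n)) (by positivity)
  have hind := (hW.indepFun_gridIncr_interpDev n q).measure_inter_preimage_eq_mul A S hA hS
  refine lt_of_lt_of_le ?_ (measure_mono ?_ :
    W ((fun ω (j : Fin n) => gridIncr n j ω) ⁻¹' A ∩ (fun ω k => interpDev n (q k) ω) ⁻¹' S) ≤ _)
  · rw [hind]
    exact ENNReal.mul_pos hApos.ne' hn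
  rintro ω ⟨hωA, hωS⟩
  have hle (t : unitInterval) : |ω.1 t - ωb.1 t| ≤ 3 * r / 4 := by
    refine hq.induction_on (p := fun t => |ω.1 t - ωb.1 t| ≤ 3 * r / 4) t
      (isClosed_le (by fun_prop) continuous_const) fun k => ?_
    have h1 : |interpDev n (q k) ω| ≤ r / 4 := hωS k
    have h2 := hdev (q k)
    have h3 : |∑ j : Fin n, cellWeight n j (q k) * (gridIncr n j ω - gridIncr n j ωb)|
        ≤ r / 4 := by
      calc _ ≤ ∑ j : Fin n, |cellWeight n j (q k) * (gridIncr n j ω - gridIncr n j ωb)| :=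
            Finset.abs_sum_le_sum_abs _ _
        _ ≤ ∑ j : Fin n, r / (4 * n) := by
            refine Finset.sum_le_sum fun j _ => ?_
            have hw := cellWeight_mem_Icc j.2 (q k)
            have hj : |gridIncr n j ω - gridIncr n j ωb| < r / (4 * n) := by
              simpa [Real.dist_eq] using hωA j
            rw [abs_mul, abs_of_nonneg hw.1]
            nlinarith [abs_nonneg (gridIncr n j ω - gridIncr n j ωb), hw.1, hw.2]
        _ = r / 4 := by simp; field_simp
    have h4 : ω.1 (q k) - ωb.1 (q k) = interpDev n (q k) ω - interpDev n (q k) ωb +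
        ∑ j : Fin n, cellWeight n j (q k) * (gridIncr n j ω - gridIncr n j ωb) := by
      simp only [interpDev, mul_sub, Finset.sum_sub_distrib]
      ring
    rw [h4]
    rw [abs_le] at *
    constructor <;> linarith [h1.1, h1.2, h2.1, h2.2, h3.1, h3.2]
  rw [mem_ball, Subtype.dist_eq]
  refine lt_of_le_of_lt ((ContinuousMap.dist_le (by positivity)).2 fun t => ?_)
    (by linarith : 3 * r / 4 < r)
  rw [Real.dist_eq]
  exact hle t

/-- The Wiener measure of the cylinders shrinks to `0` along any sequence of radii shrinking
to `0`. -/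
lemma IsWienerMeasure.tendsto_measure_cylinder (hW : IsWienerMeasure W) (ωb : PathSpace)
    {ε : ℕ → ℝ} (hlim : Tendsto ε atTop (𝓝 0)) :
    Tendsto (fun n => W (cylinder ωb n (ε n))) atTop (𝓝 0) := by
  have := hW.1
  have hmap := hW.map_eval 1
  have hv : Real.toNNReal ((1 : unitInterval) : ℝ) ≠ 0 := by simp
  have hsing : gaussianReal 0 (Real.toNNReal ((1 : unitInterval) : ℝ)) {ωb.1 1} = 0 :=
    gaussianReal_absolutelyContinuous 0 hv (by simp)
  have hthick := tendsto_measure_cthickening_of_isClosed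
    (μ := gaussianReal 0 (Real.toNNReal ((1 : unitInterval) : ℝ))) (s := {ωb.1 1})
    ⟨1, one_pos, measure_ne_top _ _⟩ isClosed_singleton
  rw [hsing] at hthick
  refine tendsto_of_tendsto_of_tendsto_of_le_of_le' tendsto_const_nhds (hthick.comp hlim)
    (Eventually.of_forall fun _ => zero_le) ?_
  filter_upwards [eventually_gt_atTop 0] with n hn
  rw [Function.comp_apply, ← hmap,
    Measure.map_apply (by fun_prop) isClosed_cthickening.measurableSet]
  refine measure_mono fun ω hω => ?_
  have h := hω n (by simp; omega)
  rw [gridPt_self hn] at h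
  rw [mem_preimage, cthickening_singleton _ ((abs_nonneg _).trans h)]
  exact h

end WienerSupport

lemma ball_subset_cylinder (ωb : PathSpace) (n : ℕ) (r : ℝ) : ball ωb r ⊆ cylinder ωb n r := by
  intro ω hω j _
  rw [mem_ball, Subtype.dist_eq] at hω
  exact ((ContinuousMap.dist_apply_le_dist _).trans_lt hω).le

/-- For large `n`, the double logarithm at the cylinder `C_n(ω̄, ε_n)` is nonnegative and bounded by
the one at each ball `B(ω̄, r)` with `r ≤ ε_n`. -/
lemma IsWienerMeasure.eventually_loglog_cylinder_le {W : Measure PathSpace}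
    (hW : IsWienerMeasure W) (ωb : PathSpace) {ε : ℕ → ℝ} (hpos : ∀ n, 0 < ε n)
    (hlim : Tendsto ε atTop (𝓝 0)) :
    ∀ᶠ n in atTop, 0 ≤ Real.log (-Real.log ((W (cylinder ωb n (ε n))).toReal)) ∧
      ∀ r, 0 < r → r ≤ ε n → Real.log (-Real.log ((W (cylinder ωb n (ε n))).toReal)) ≤
        Real.log (-Real.log ((W (ball ωb r)).toReal)) := by
  have := hW.1
  have hreal : Tendsto (fun n => (W (cylinder ωb n (ε n))).toReal) atTop (𝓝 0) := by
    simpa [Function.comp_def] using (ENNReal.tendsto_toReal ENNReal.zero_ne_top).comp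
      (hW.tendsto_measure_cylinder ωb hlim)
  filter_upwards [hreal.eventually (gt_mem_nhds (Real.exp_pos (-1)))] with n hn
  set c := (W (cylinder ωb n (ε n))).toReal
  have hball (r : ℝ) (hr : 0 < r) (hrn : r ≤ ε n) :
      0 < (W (ball ωb r)).toReal ∧ (W (ball ωb r)).toReal ≤ c :=
    ⟨ENNReal.toReal_pos (hW.measure_ball_pos ωb hr).ne' (measure_ne_top _ _),
      ENNReal.toReal_mono (measure_ne_top _ _) (measure_mono
        ((ball_subset_ball hrn).trans (ball_subset_cylinder ωb n (ε n))))⟩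
  have hc : 0 < c := (hball _ (hpos n) le_rfl).1.trans_le (hball _ (hpos n) le_rfl).2
  have hlogc : 1 ≤ -Real.log c := by
    linarith [(Real.log_le_iff_le_exp hc).2 hn.le]
  refine ⟨Real.log_nonneg hlogc, fun r hr hrn => ?_⟩
  obtain ⟨h1, h2⟩ := hball r hr hrn
  exact Real.log_le_log (by linarith) (neg_le_neg (Real.log_le_log h1 h2))

lemma exists_mem_Ioc_of_tendsto_zero {ε : ℕ → ℝ} (hlim : Tendsto ε atTop (𝓝 0)) {r : ℝ}
    (hr : 0 < r) {N : ℕ} (hN : r ≤ ε N) : ∃ n ≥ N, ε (n + 1) < r ∧ r ≤ ε n := by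
  by_contra! hcon
  have hge (n : ℕ) (hn : N ≤ n) : r ≤ ε n := by
    induction n, hn using Nat.le_induction with
    | base => exact hN
    | succ n hn ih => exact not_lt.1 fun h => (hcon n hn h).not_ge ih
  exact hr.not_ge (ge_of_tendsto hlim (eventually_atTop.2 ⟨N, hge⟩))

/-- The local orders of the Wiener measure are bounded below by the corresponding
asymptotics of cylinder measures along a sequence `ε_n ↓ 0` with
`log ε_n ∼ log ε_{n+1}`. -/
theorem cylinder_lower_bounds (W : Measure PathSpace) (hW : IsWienerMeasure W)
    (ε : ℕ → ℝ) (hpos : ∀ n, 0 < ε n) (hdec : StrictAnti ε)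
    (hlim : Tendsto ε atTop (𝓝 (0:ℝ)))
    (hlog : Tendsto (fun n : ℕ => Real.log (ε n) / Real.log (ε (n+1))) atTop (𝓝 (1:ℝ)))
    (ωb : PathSpace) :
    liminf (fun n : ℕ =>
        ((Real.log (-Real.log ((W (cylinder ωb n (ε n))).toReal)) / (-Real.log (ε n)) : ℝ)
          : EReal)) atTop ≤ lowerLocOrd W ωb ∧
    limsup (fun n : ℕ =>
        ((Real.log (-Real.log ((W (cylinder ωb n (ε n))).toReal)) / (-Real.log (ε n)) : ℝ)
          : EReal)) atTop ≤ upperLocOrd W ωb := by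
  set u : ℕ → ℝ := fun n =>
    Real.log (-Real.log ((W (cylinder ωb n (ε n))).toReal)) / (-Real.log (ε n)) with hu
  set v : ℝ → ℝ := fun r =>
    Real.log (-Real.log ((W (ball ωb r)).toReal)) / (-Real.log r) with hv
  have hε : ∀ᶠ n in atTop, ε n < 1 := hlim.eventually (gt_mem_nhds one_pos)
  have hcomp := hW.eventually_loglog_cylinder_le ωb hpos hlim
  have hle : ∀ᶠ n in atTop, u n ≤ v (ε n) := by
    filter_upwards [hcomp, hε] with n hn hn1
    have hlogε : 0 < -Real.log (ε n) := by linarith [Real.log_neg (hpos n) hn1]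
    exact div_le_div_of_nonneg_right (hn.2 _ (hpos n) le_rfl) hlogε.le
  constructor
  · refine le_of_forall_lt fun c hc => ?_
    obtain ⟨c', hcc', hc'⟩ := EReal.lt_iff_exists_real_btwn.1 hc
    obtain ⟨c'', hcc'', hc''⟩ := EReal.lt_iff_exists_real_btwn.1 hc'
    have hcc : c' < c'' := EReal.coe_lt_coe_iff.1 hcc''
    refine hcc'.trans_le (le_liminf_of_le (by isBoundedDefault) ?_)
    have hul : ∀ᶠ n in atTop, c'' < u n :=
      (eventually_lt_of_lt_liminf hc'').mono fun n hn => EReal.coe_lt_coe_iff.1 hn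
    have hmul : ∀ᶠ n in atTop, c' ≤ max c'' 0 * (Real.log (ε n) / Real.log (ε (n + 1))) := by
      have hmax : c' < max c'' 0 * 1 := by rw [mul_one]; exact lt_max_of_lt_left hcc
      exact ((hlog.const_mul (max c'' 0)).eventually (lt_mem_nhds hmax)).mono fun _ h => h.le
    obtain ⟨N, hN⟩ := eventually_atTop.1 (hul.and (hmul.and (hcomp.and hε)))
    filter_upwards [Ioo_mem_nhdsGT (hpos N)] with r hr
    rw [EReal.coe_le_coe_iff]
    obtain ⟨n, hNn, hnr, hrn⟩ := exists_mem_Ioc_of_tendsto_zero hlim hr.1 hr.2.le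
    obtain ⟨h1, h2, ⟨h3, h4⟩, h5⟩ := hN n hNn
    have hlog1 : Real.log r < 0 := Real.log_neg hr.1 (hrn.trans_lt h5)
    have hlog2 : Real.log (ε n) < 0 := Real.log_neg (hpos n) h5
    have hlog3 : Real.log (ε (n + 1)) ≤ Real.log r := Real.log_le_log (hpos _) hnr.le
    have hu0 : 0 ≤ u n := div_nonneg h3 (by linarith)
    have hratio : 0 ≤ Real.log (ε n) / Real.log (ε (n + 1)) :=
      div_nonneg_of_nonpos hlog2.le (by linarith)
    calc c' ≤ max c'' 0 * (Real.log (ε n) / Real.log (ε (n + 1))) := h2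
      _ ≤ u n * (Real.log (ε n) / Real.log (ε (n + 1))) := by
          gcongr
          exact max_le h1.le hu0
      _ = Real.log (-Real.log ((W (cylinder ωb n (ε n))).toReal)) /
            (-Real.log (ε (n + 1))) := by
          have : Real.log (ε (n + 1)) ≠ 0 := by linarith
          have := hlog2.ne
          simp only [hu]
          field_simp
      _ ≤ Real.log (-Real.log ((W (cylinder ωb n (ε n))).toReal)) / (-Real.log r) :=
          div_le_div_of_nonneg_left h3 (by linarith) (by linarith)
      _ ≤ v r := div_le_div_of_nonneg_right (h4 r hr.1 hrn) (by linarith)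
  · have hεt : Tendsto ε atTop (𝓝[>] 0) :=
      tendsto_nhdsWithin_iff.2 ⟨hlim, Eventually.of_forall hpos⟩
    calc limsup (fun n => ((u n : ℝ) : EReal)) atTop
        ≤ limsup (fun n => ((v (ε n) : ℝ) : EReal)) atTop :=
          limsup_le_limsup (hle.mono fun n hn => EReal.coe_le_coe_iff.2 hn)
      _ = limsup (fun r => ((v r : ℝ) : EReal)) (map ε atTop) := rfl
      _ ≤ upperLocOrd W ωb := limsup_le_limsup_of_le hεt

end Multifractal
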